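/- Let d ≥ 1 be an integer and let β ∈ (0, d). There exists a constant C > 0, depending only on d and β, such that for all t₁, t₂, t₃, t₄ > 0, all R > 0, and all ξ ∈ ℝ^d, ∫_{Q_R × Q_R} ∫_{ℝ^{4d}} p_{t₁}(x₁ − ỹ) p_{t₂}(x₂ − z̃) p_{t₃}(y − z) p_{t₄}(ξ − y) ‖y − ỹ‖^{−β} ‖z − z̃‖^{−β} dỹ dz̃ dy dz dx₁ dx₂ ≤ C R^{2d−2β}. (In the paper this is the bound for the quantity Φ^{(2)}(τ, ξ) governing the second-derivative term, with t₁ = t − s, t₂ = t − r, t₃ = s − r, t₄ = τ − s for 0 < r < s < τ < t.) -/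

import Mathlib

open MeasureTheory

noncomputable def heatKernel (d : ℕ) (t : ℝ) (x : EuclideanSpace ℝ (Fin d)) : ℝ :=
  (2 * Real.pi * t) ^ (-(d : ℝ) / 2) * Real.exp (-‖x‖ ^ 2 / (2 * t))

def box (d : ℕ) (R : ℝ) : Set (EuclideanSpace ℝ (Fin d)) :=
  {x | ∀ i, |x i| ≤ R}

/-!
Write `f₁, …, f₄` for the heat kernels. The six-fold integral runs over the tree
`x₁ – ỹ – y – z – z̃ – x₂` with `ξ` attached to `y`, and for fixed `(y, z)` its two branches
decouple. Integrating one branch over `(x₁, ỹ)` costs at most `‖f₁‖₁ · sup_a ∫_s ‖x - a‖^(-β) dx`,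
and the remaining integral of `f₃ (y - z) f₄ (ξ - y)` over `(y, z)` is `‖f₃‖₁ ‖f₄‖₁`. So the heat
kernels enter only through their total mass, and it remains to bound `∫_s ‖x - a‖^(-β) dx` by
`C μ(s)^(1 - β/d)`, by splitting `s` at distance `μ(s)^(1/d)` from `a`.
-/

open Module Metric
open scoped ENNReal NNReal

section Tonelli

variable {α γ δ : Type*} [MeasurableSpace α] [MeasurableSpace γ] [MeasurableSpace δ]
  {μ : Measure α} {π : Measure δ} {ν : Measure γ} [SFinite μ] [SFinite π] [SFinite ν]

lemma lintegral_lintegral_mul_le {F : α → γ → ℝ≥0∞} {g : γ → ℝ≥0∞} {S : ℝ≥0∞}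
    (hF : Measurable (Function.uncurry F)) (hg : Measurable g) (hS : ∀ y, ∫⁻ x, F x y ∂μ ≤ S) :
    ∫⁻ x, ∫⁻ y, F x y * g y ∂ν ∂μ ≤ S * ∫⁻ y, g y ∂ν := by
  calc ∫⁻ x, ∫⁻ y, F x y * g y ∂ν ∂μ
      = ∫⁻ y, (∫⁻ x, F x y ∂μ) * g y ∂ν := by
        rw [lintegral_lintegral_swap (by fun_prop)]
        exact lintegral_congr fun y => lintegral_mul_const _ (by fun_prop)
    _ ≤ ∫⁻ y, S * g y ∂ν := by
        gcongr with y
        exact hS y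
    _ = S * ∫⁻ y, g y ∂ν := lintegral_const_mul _ hg

lemma lintegral_lintegral_lintegral_mul_le {A : α → γ → ℝ≥0∞} {B : δ → γ → ℝ≥0∞} {g : γ → ℝ≥0∞}
    {S T : ℝ≥0∞} (hA : Measurable (Function.uncurry A)) (hB : Measurable (Function.uncurry B))
    (hg : Measurable g) (hS : ∀ w, ∫⁻ p, A p w ∂μ ≤ S) (hT : ∀ w, ∫⁻ q, B q w ∂π ≤ T) :
    ∫⁻ p, ∫⁻ q, ∫⁻ w, B q w * (A p w * g w) ∂ν ∂π ∂μ ≤ T * (S * ∫⁻ w, g w ∂ν) := by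
  calc ∫⁻ p, ∫⁻ q, ∫⁻ w, B q w * (A p w * g w) ∂ν ∂π ∂μ
      ≤ ∫⁻ p, T * ∫⁻ w, A p w * g w ∂ν ∂μ := by
        gcongr with p
        exact lintegral_lintegral_mul_le hB (by fun_prop) hT
    _ = T * ∫⁻ p, ∫⁻ w, A p w * g w ∂ν ∂μ := lintegral_const_mul _ (by fun_prop)
    _ ≤ T * (S * ∫⁻ w, g w ∂ν) := by
        gcongr
        exact lintegral_lintegral_mul_le hA hg hS

end Tonelli

section Group

variable {G : Type*} [AddCommGroup G] [MeasurableSpace G] [MeasurableAdd₂ G] [MeasurableNeg G]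
  {μ : Measure G} [SFinite μ] [μ.IsAddLeftInvariant] [μ.IsNegInvariant]
  {s s₁ s₂ : Set G} {f f₁ f₂ f₃ f₄ k : G → ℝ≥0∞} {S S₁ S₂ : ℝ≥0∞}

lemma lintegral_restrict_prod_comp_sub_mul_comp_sub_le (hf : Measurable f) (hk : Measurable k)
    (hS : ∀ a, ∫⁻ x in s, k (x - a) ∂μ ≤ S) (y : G) :
    ∫⁻ p, f (p.1 - p.2) * k (p.2 - y) ∂(μ.restrict s).prod μ ≤ S * ∫⁻ u, f u ∂μ := by
  have substitute (x : G) :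
      ∫⁻ a, f (x - a) * k (a - y) ∂μ = ∫⁻ u, k (x - (u + y)) * f u ∂μ := by
    rw [← lintegral_sub_left_eq_self _ x]
    simp only [sub_sub_cancel, sub_sub, mul_comm]
  calc ∫⁻ p, f (p.1 - p.2) * k (p.2 - y) ∂(μ.restrict s).prod μ
      = ∫⁻ x in s, ∫⁻ u, k (x - (u + y)) * f u ∂μ ∂μ := by
        rw [lintegral_prod _ (by fun_prop)]
        simp only [substitute]
    _ ≤ S * ∫⁻ u, f u ∂μ :=
        lintegral_lintegral_mul_le (by fun_prop) hf fun u => hS (u + y)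

lemma lintegral_prod_comp_sub_mul_comp_sub (hf₃ : Measurable f₃) (hf₄ : Measurable f₄) (ξ : G) :
    ∫⁻ w, f₃ (w.1 - w.2) * f₄ (ξ - w.1) ∂μ.prod μ = (∫⁻ u, f₃ u ∂μ) * ∫⁻ u, f₄ u ∂μ := by
  rw [lintegral_prod _ (by fun_prop)]
  have inner (y : G) : ∫⁻ z, f₃ (y - z) * f₄ (ξ - y) ∂μ = (∫⁻ u, f₃ u ∂μ) * f₄ (ξ - y) := by
    rw [lintegral_mul_const _ (by fun_prop), lintegral_sub_left_eq_self f₃ y]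
  simp only [inner]
  rw [lintegral_const_mul _ (by fun_prop), lintegral_sub_left_eq_self f₄ ξ]

lemma setLIntegral_tree_le (hf₁ : Measurable f₁) (hf₂ : Measurable f₂) (hf₃ : Measurable f₃)
    (hf₄ : Measurable f₄) (hk : Measurable k) (hS₁ : ∀ a, ∫⁻ x in s₁, k (x - a) ∂μ ≤ S₁)
    (hS₂ : ∀ a, ∫⁻ x in s₂, k (x - a) ∂μ ≤ S₂) (ξ : G) :
    ∫⁻ x₁ in s₁, ∫⁻ x₂ in s₂, ∫⁻ a, ∫⁻ b, ∫⁻ y, ∫⁻ z,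
        f₁ (x₁ - a) * f₂ (x₂ - b) * f₃ (y - z) * f₄ (ξ - y) * k (a - y) * k (b - z)
          ∂μ ∂μ ∂μ ∂μ ∂μ ∂μ ≤
      S₁ * S₂ * ((∫⁻ x, f₁ x ∂μ) * (∫⁻ x, f₂ x ∂μ) * (∫⁻ x, f₃ x ∂μ) * ∫⁻ x, f₄ x ∂μ) := by
  let A (p w : G × G) : ℝ≥0∞ := f₁ (p.1 - p.2) * k (p.2 - w.1)
  let B (q w : G × G) : ℝ≥0∞ := f₂ (q.1 - q.2) * k (q.2 - w.2)
  let g (w : G × G) : ℝ≥0∞ := f₃ (w.1 - w.2) * f₄ (ξ - w.1)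
  have group_variables :
      ∫⁻ x₁ in s₁, ∫⁻ x₂ in s₂, ∫⁻ a, ∫⁻ b, ∫⁻ y, ∫⁻ z,
        f₁ (x₁ - a) * f₂ (x₂ - b) * f₃ (y - z) * f₄ (ξ - y) * k (a - y) * k (b - z)
          ∂μ ∂μ ∂μ ∂μ ∂μ ∂μ =
      ∫⁻ p, ∫⁻ q, ∫⁻ w, B q w * (A p w * g w) ∂μ.prod μ
        ∂(μ.restrict s₂).prod μ ∂(μ.restrict s₁).prod μ := by
    rw [lintegral_prod _ (by fun_prop)]
    refine lintegral_congr fun x₁ => ?_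
    rw [lintegral_lintegral_swap (by fun_prop)]
    refine lintegral_congr fun a => ?_
    rw [lintegral_prod _ (by fun_prop)]
    refine lintegral_congr fun x₂ => lintegral_congr fun b => ?_
    rw [lintegral_prod _ (by fun_prop)]
    refine lintegral_congr fun y => lintegral_congr fun z => ?_
    ring
  rw [group_variables]
  refine (lintegral_lintegral_lintegral_mul_le (A := A) (B := B) (g := g)
    (by fun_prop) (by fun_prop) (by fun_prop)
    (fun w => lintegral_restrict_prod_comp_sub_mul_comp_sub_le hf₁ hk hS₁ w.1)
    (fun w => lintegral_restrict_prod_comp_sub_mul_comp_sub_le hf₂ hk hS₂ w.2)).trans_eq ?_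
  rw [lintegral_prod_comp_sub_mul_comp_sub hf₃ hf₄]
  ring

end Group

section Riesz

variable {E : Type*} [NormedAddCommGroup E]

lemma enorm_norm_rpow_le_indicator_ball_add {β r : ℝ} (hβ : 0 ≤ β) (hr : 0 < r) (x : E) :
    ‖‖x‖ ^ (-β)‖ₑ ≤
      (ball (0 : E) r).indicator (fun x => ‖‖x‖ ^ (-β)‖ₑ) x + ENNReal.ofReal (r ^ (-β)) := by
  by_cases hx : x ∈ ball 0 r
  · rw [Set.indicator_of_mem hx]
    exact le_self_add
  · rw [Set.indicator_of_notMem hx, zero_add, Real.enorm_of_nonneg (by positivity)]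
    have hrx : r ≤ ‖x‖ := by simpa using hx
    exact ENNReal.ofReal_le_ofReal (Real.rpow_le_rpow_of_nonpos hr hrx (neg_nonpos.2 hβ))

variable [MeasurableSpace E] [BorelSpace E] (μ : Measure E)

lemma setLIntegral_enorm_norm_sub_rpow_le_ball_add [μ.IsAddRightInvariant] {β r : ℝ}
    (hβ : 0 ≤ β) (hr : 0 < r) (s : Set E) (a : E) :
    ∫⁻ x in s, ‖‖x - a‖ ^ (-β)‖ₑ ∂μ ≤
      (∫⁻ x in ball (0 : E) r, ‖‖x‖ ^ (-β)‖ₑ ∂μ) + ENNReal.ofReal (r ^ (-β)) * μ s := by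
  let nearPart : E → ℝ≥0∞ := (ball 0 r).indicator fun x => ‖‖x‖ ^ (-β)‖ₑ
  calc ∫⁻ x in s, ‖‖x - a‖ ^ (-β)‖ₑ ∂μ
      ≤ ∫⁻ x in s, (nearPart (x - a) + ENNReal.ofReal (r ^ (-β))) ∂μ :=
        lintegral_mono fun x => enorm_norm_rpow_le_indicator_ball_add hβ hr (x - a)
    _ = (∫⁻ x in s, nearPart (x - a) ∂μ) + ENNReal.ofReal (r ^ (-β)) * μ s := by
        rw [lintegral_add_right _ measurable_const, setLIntegral_const]
    _ ≤ (∫⁻ x, nearPart (x - a) ∂μ) + ENNReal.ofReal (r ^ (-β)) * μ s := by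
        gcongr
        exact Measure.restrict_le_self
    _ = (∫⁻ x in ball (0 : E) r, ‖‖x‖ ^ (-β)‖ₑ ∂μ) + ENNReal.ofReal (r ^ (-β)) * μ s := by
        rw [lintegral_sub_right_eq_self, lintegral_indicator measurableSet_ball]

variable [NormedSpace ℝ E] [FiniteDimensional ℝ E] [μ.IsAddHaarMeasure]

lemma setIntegral_ball_norm_rpow (p : ℝ) {r : ℝ} (hr : 0 < r) :
    ∫ x in ball (0 : E) r, ‖x‖ ^ p ∂μ =
      r ^ (finrank ℝ E + p) * ∫ x in ball (0 : E) 1, ‖x‖ ^ p ∂μ := by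
  have scaling := Measure.setIntegral_comp_smul_of_pos μ (fun x : E => ‖x‖ ^ p) (ball 0 1) hr
  simp only [norm_smul, Real.norm_of_nonneg hr.le, Real.mul_rpow hr.le (norm_nonneg _),
    integral_const_mul, smul_unitBall_of_pos hr, smul_eq_mul] at scaling
  rw [Real.rpow_add hr, Real.rpow_natCast, mul_assoc, scaling,
    mul_inv_cancel_left₀ (by positivity)]

lemma setLIntegral_ball_enorm_norm_rpow {β r : ℝ} (hβ : β < finrank ℝ E) (hdim : 0 < finrank ℝ E)
    (hr : 0 < r) :
    ∫⁻ x in ball (0 : E) r, ‖‖x‖ ^ (-β)‖ₑ ∂μ =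
      ENNReal.ofReal (r ^ (finrank ℝ E - β) * ∫ x in ball (0 : E) 1, ‖x‖ ^ (-β) ∂μ) := by
  have integrable : IntegrableOn (fun x : E => ‖x‖ ^ (-β)) (ball 0 r) μ :=
    integrableOn_ball_of_norm_le_rpow hdim (C := 1) hβ
      (.of_forall fun x => by rw [Real.norm_of_nonneg (by positivity), one_mul])
      (Measurable.aestronglyMeasurable (by fun_prop))
  rw [← ofReal_integral_norm_eq_lintegral_enorm integrable, sub_eq_add_neg,
    ← setIntegral_ball_norm_rpow μ _ hr]
  simp only [Real.norm_of_nonneg (Real.rpow_nonneg (norm_nonneg _) _)]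

lemma setLIntegral_enorm_norm_sub_rpow_le_of_measure_le {β m : ℝ} (hβ₀ : 0 ≤ β)
    (hβ : β < finrank ℝ E) (hm : 0 < m) {s : Set E} (hs : μ s ≤ ENNReal.ofReal m) (a : E) :
    ∫⁻ x in s, ‖‖x - a‖ ^ (-β)‖ₑ ∂μ ≤ ENNReal.ofReal
      (((∫ x in ball (0 : E) 1, ‖x‖ ^ (-β) ∂μ) + 1) * m ^ (1 - β / finrank ℝ E)) := by
  set K : ℝ := ∫ x in ball (0 : E) 1, ‖x‖ ^ (-β) ∂μ
  have hK : 0 ≤ K := integral_nonneg fun x => by positivity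
  have hd : (0 : ℝ) < finrank ℝ E := hβ₀.trans_lt hβ
  let r : ℝ := m ^ (finrank ℝ E : ℝ)⁻¹
  have hr : 0 < r := by positivity
  have near_term : r ^ (finrank ℝ E - β) = m ^ (1 - β / finrank ℝ E) := by
    rw [← Real.rpow_mul hm.le]
    congr 1
    field_simp
  have far_term : r ^ (-β) * m = m ^ (1 - β / finrank ℝ E) := by
    rw [← Real.rpow_mul hm.le, ← Real.rpow_add_one hm.ne']
    congr 1
    field_simp
    ring
  calc ∫⁻ x in s, ‖‖x - a‖ ^ (-β)‖ₑ ∂μ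
      ≤ (∫⁻ x in ball (0 : E) r, ‖‖x‖ ^ (-β)‖ₑ ∂μ) + ENNReal.ofReal (r ^ (-β)) * μ s :=
        setLIntegral_enorm_norm_sub_rpow_le_ball_add μ hβ₀ hr s a
    _ ≤ ENNReal.ofReal (r ^ (finrank ℝ E - β) * K) +
          ENNReal.ofReal (r ^ (-β)) * ENNReal.ofReal m := by
        rw [setLIntegral_ball_enorm_norm_rpow μ hβ (mod_cast hd) hr]
        gcongr
    _ = ENNReal.ofReal ((K + 1) * m ^ (1 - β / finrank ℝ E)) := by
        rw [near_term, ← ENNReal.ofReal_mul (by positivity), far_term,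
          ← ENNReal.ofReal_add (mul_nonneg (by positivity) hK) (by positivity), add_mul, one_mul,
          mul_comm K]

lemma exists_setLIntegral_enorm_norm_sub_rpow_le {β : ℝ} (hβ₀ : 0 ≤ β) (hβ : β < finrank ℝ E) :
    ∃ C : ℝ≥0, 0 < C ∧ ∀ (s : Set E) (a : E),
      ∫⁻ x in s, ‖‖x - a‖ ^ (-β)‖ₑ ∂μ ≤ C * μ s ^ (1 - β / finrank ℝ E) := by
  let C : ℝ := (∫ x in ball (0 : E) 1, ‖x‖ ^ (-β) ∂μ) + 1
  have hC : 0 < C := add_pos_of_nonneg_of_pos (integral_nonneg fun x => by positivity) one_pos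
  refine ⟨C.toNNReal, Real.toNNReal_pos.2 hC, fun s a => ?_⟩
  change _ ≤ ENNReal.ofReal C * _
  have exponent_pos : 0 < 1 - β / finrank ℝ E :=
    sub_pos.2 ((div_lt_one (hβ₀.trans_lt hβ)).2 hβ)
  rcases eq_or_ne (μ s) 0 with null | pos
  · simp only [Measure.restrict_eq_zero.2 null, lintegral_zero_measure, zero_le]
  rcases eq_or_ne (μ s) ∞ with infinite | finite
  · rw [infinite, ENNReal.top_rpow_of_pos exponent_pos,
      ENNReal.mul_top (ENNReal.ofReal_pos.2 hC).ne']
    exact le_top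
  · have measure_pos : 0 < (μ s).toReal := ENNReal.toReal_pos pos finite
    rw [← ENNReal.ofReal_toReal finite, ENNReal.ofReal_rpow_of_pos measure_pos,
      ← ENNReal.ofReal_mul hC.le]
    exact setLIntegral_enorm_norm_sub_rpow_le_of_measure_le μ hβ₀ hβ measure_pos
      (ENNReal.ofReal_toReal finite).ge a

theorem stmt_7_general {β : ℝ} (hβ₀ : 0 ≤ β) (hβ : β < finrank ℝ E) :
    ∃ C : ℝ≥0, 0 < C ∧ ∀ f₁ f₂ f₃ f₄ : E → ℝ, Measurable f₁ → Measurable f₂ → Measurable f₃ →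
      Measurable f₄ → ∀ (s₁ s₂ : Set E) (ξ : E),
      ‖∫ x₁ in s₁, ∫ x₂ in s₂, ∫ ytil, ∫ ztil, ∫ y, ∫ z,
          f₁ (x₁ - ytil) * f₂ (x₂ - ztil) * f₃ (y - z) * f₄ (ξ - y) *
            ‖y - ytil‖ ^ (-β) * ‖z - ztil‖ ^ (-β) ∂μ ∂μ ∂μ ∂μ ∂μ ∂μ‖ₑ ≤
        C * (μ s₁ * μ s₂) ^ (1 - β / finrank ℝ E) *
          ((∫⁻ x, ‖f₁ x‖ₑ ∂μ) * (∫⁻ x, ‖f₂ x‖ₑ ∂μ) * (∫⁻ x, ‖f₃ x‖ₑ ∂μ) * ∫⁻ x, ‖f₄ x‖ₑ ∂μ) := by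
  obtain ⟨C, hC, riesz_le⟩ := exists_setLIntegral_enorm_norm_sub_rpow_le μ hβ₀ hβ
  have exponent_nonneg : 0 ≤ 1 - β / finrank ℝ E :=
    sub_nonneg.2 ((div_le_one (hβ₀.trans_lt hβ)).2 hβ.le)
  refine ⟨C ^ 2, by positivity, fun f₁ f₂ f₃ f₄ hf₁ hf₂ hf₃ hf₄ s₁ s₂ ξ => ?_⟩
  calc _ ≤ ∫⁻ x₁ in s₁, ∫⁻ x₂ in s₂, ∫⁻ a, ∫⁻ b, ∫⁻ y, ∫⁻ z,
          ‖f₁ (x₁ - a)‖ₑ * ‖f₂ (x₂ - b)‖ₑ * ‖f₃ (y - z)‖ₑ * ‖f₄ (ξ - y)‖ₑ *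
            ‖‖a - y‖ ^ (-β)‖ₑ * ‖‖b - z‖ ^ (-β)‖ₑ ∂μ ∂μ ∂μ ∂μ ∂μ ∂μ := by
        iterate 6 refine (enorm_integral_le_lintegral_enorm _).trans (lintegral_mono fun _ => ?_)
        simp only [enorm_mul, norm_sub_rev, le_refl]
    _ ≤ (C * μ s₁ ^ (1 - β / finrank ℝ E)) * (C * μ s₂ ^ (1 - β / finrank ℝ E)) *
          ((∫⁻ x, ‖f₁ x‖ₑ ∂μ) * (∫⁻ x, ‖f₂ x‖ₑ ∂μ) * (∫⁻ x, ‖f₃ x‖ₑ ∂μ) * ∫⁻ x, ‖f₄ x‖ₑ ∂μ) :=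
        setLIntegral_tree_le hf₁.enorm hf₂.enorm hf₃.enorm hf₄.enorm
          (k := fun x => ‖‖x‖ ^ (-β)‖ₑ) (by fun_prop) (riesz_le s₁) (riesz_le s₂) ξ
    _ = _ := by
        rw [ENNReal.mul_rpow_of_nonneg _ _ exponent_nonneg, ENNReal.coe_pow]
        ring

end Riesz

section HeatKernel

variable {d : ℕ} {t : ℝ}

lemma measurable_heatKernel : Measurable (heatKernel d t) := by
  unfold heatKernel
  fun_prop

lemma heatKernel_nonneg (ht : 0 ≤ t) (x : EuclideanSpace ℝ (Fin d)) : 0 ≤ heatKernel d t x := by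
  unfold heatKernel
  positivity

lemma integral_heatKernel (ht : 0 < t) : ∫ x, heatKernel d t x = 1 := by
  have gaussian := GaussianFourier.integral_rexp_neg_mul_sq_norm (V := EuclideanSpace ℝ (Fin d))
    (b := (2 * t)⁻¹) (by positivity)
  have exponent (x : EuclideanSpace ℝ (Fin d)) :
      -‖x‖ ^ 2 / (2 * t) = -(2 * t)⁻¹ * ‖x‖ ^ 2 := by ring
  simp only [heatKernel, exponent]
  rw [integral_const_mul, gaussian, finrank_euclideanSpace_fin, div_inv_eq_mul, neg_div,
    show Real.pi * (2 * t) = 2 * Real.pi * t by ring, ← Real.rpow_add (by positivity),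
    neg_add_cancel, Real.rpow_zero]

lemma lintegral_enorm_heatKernel (ht : 0 < t) : ∫⁻ x, ‖heatKernel d t x‖ₑ = 1 := by
  have integrable : Integrable (heatKernel d t) :=
    .of_integral_ne_zero (by rw [integral_heatKernel ht]; exact one_ne_zero)
  rw [← ofReal_integral_norm_eq_lintegral_enorm integrable]
  simp only [Real.norm_of_nonneg (heatKernel_nonneg ht.le _), integral_heatKernel ht,
    ENNReal.ofReal_one]

end HeatKernel

section Box

variable {d : ℕ}

lemma volume_box (R : ℝ) : volume (box d R) = ENNReal.ofReal (2 * R) ^ d := by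
  have box_eq : box d R = WithLp.ofLp ⁻¹' Set.Icc (fun _ => -R) (fun _ => R) := by
    ext x
    simp [box, abs_le, Pi.le_def, forall_and]
  rw [box_eq, (PiLp.volume_preserving_ofLp _).measure_preimage measurableSet_Icc.nullMeasurableSet,
    Real.volume_Icc_pi]
  simp [← two_mul]

lemma volume_box_mul_self_rpow (hd : d ≠ 0) (β : ℝ) {R : ℝ} (hR : 0 < R) :
    (volume (box d R) * volume (box d R)) ^ (1 - β / d) =
      ENNReal.ofReal ((2 * R) ^ (2 * (d : ℝ) - 2 * β)) := by
  rw [volume_box, ← ENNReal.ofReal_pow (by positivity), ← ENNReal.ofReal_mul (by positivity),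
    ← pow_add, ENNReal.ofReal_rpow_of_pos (by positivity), ← Real.rpow_natCast_mul (by positivity)]
  congr 2
  push_cast
  field_simp
  ring

end Box

theorem stmt_7 (d : ℕ) (hd : 1 ≤ d) (β : ℝ) (hβ0 : 0 < β) (hβd : β < d) :
    ∃ C : ℝ, 0 < C ∧ ∀ t₁ t₂ t₃ t₄ : ℝ, 0 < t₁ → 0 < t₂ → 0 < t₃ → 0 < t₄ →
      ∀ R : ℝ, 0 < R → ∀ ξ : EuclideanSpace ℝ (Fin d),
      (∫ x₁ in box d R, ∫ x₂ in box d R,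
          ∫ ytil : EuclideanSpace ℝ (Fin d), ∫ ztil : EuclideanSpace ℝ (Fin d),
          ∫ y : EuclideanSpace ℝ (Fin d), ∫ z : EuclideanSpace ℝ (Fin d),
            heatKernel d t₁ (x₁ - ytil) * heatKernel d t₂ (x₂ - ztil) *
              heatKernel d t₃ (y - z) * heatKernel d t₄ (ξ - y) *
              ‖y - ytil‖ ^ (-β) * ‖z - ztil‖ ^ (-β)) ≤
        C * R ^ (2 * (d : ℝ) - 2 * β) := by
  obtain ⟨C, hC, bound⟩ := stmt_7_general (E := EuclideanSpace ℝ (Fin d)) volume hβ0.le (by simpa)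
  refine ⟨C * 2 ^ (2 * (d : ℝ) - 2 * β), by positivity, fun t₁ t₂ t₃ t₄ h₁ h₂ h₃ h₄ R hR ξ => ?_⟩
  have enorm_le := bound _ _ _ _ (measurable_heatKernel (t := t₁)) (measurable_heatKernel (t := t₂))
    (measurable_heatKernel (t := t₃)) (measurable_heatKernel (t := t₄)) (box d R) (box d R) ξ
  simp only [lintegral_enorm_heatKernel, h₁, h₂, h₃, h₄, mul_one, finrank_euclideanSpace_fin,
    volume_box_mul_self_rpow (Nat.one_le_iff_ne_zero.1 hd) β hR] at enorm_le
  rw [← ENNReal.ofReal_coe_nnreal, ← ENNReal.ofReal_mul (by positivity),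
    Real.mul_rpow zero_le_two hR.le, ← mul_assoc, ← ofReal_norm] at enorm_le
  exact (Real.le_norm_self _).trans ((ENNReal.ofReal_le_ofReal_iff (by positivity)).1 enorm_le)
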